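/- For sufficiently large ρ the following holds: for any two strongly distinct lattice r-subspaces V and W, one has Ξ₂(V) ∩ Ξ₂(W) ⊆ Ξ₁(V + W). -/

import Mathlib

noncomputable section

open Set Submodule Module MeasureTheory Relation
open scoped RealInnerProductSpace

variable {d : ℕ}

/-- The lattice Γ generated over ℤ by the basis `B` of ℝ^d. -/
def latticeOf (B : Basis (Fin d) ℝ (EuclideanSpace ℝ (Fin d))) :
    Submodule ℤ (EuclideanSpace ℝ (Fin d)) :=
  Submodule.span ℤ (Set.range B)

/-- The determinant d(Γ) of the lattice generated by `B`. -/
def latDet (B : Basis (Fin d) ℝ (EuclideanSpace ℝ (Fin d))) : ℝ :=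
  |(EuclideanSpace.basisFun (Fin d) ℝ).toBasis.det (fun i => B i)|

/-- The dual lattice Γ† = {θ : θ·g ∈ 2πℤ for all g ∈ Γ}. -/
def dualLattice (B : Basis (Fin d) ℝ (EuclideanSpace ℝ (Fin d))) :
    Set (EuclideanSpace ℝ (Fin d)) :=
  {θ | ∀ g ∈ latticeOf B, ∃ k : ℤ, ⟪θ, g⟫ = 2 * Real.pi * k}

/-- Θ_r : nonzero dual lattice vectors of norm at most r. -/
def Theta (B : Basis (Fin d) ℝ (EuclideanSpace ℝ (Fin d))) (r : ℝ) :
    Set (EuclideanSpace ℝ (Fin d)) :=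
  {θ | θ ∈ dualLattice B ∧ θ ≠ 0 ∧ ‖θ‖ ≤ r}

/-- Θ_r⁰ : dual lattice vectors of norm at most r (including 0). -/
def Theta0 (B : Basis (Fin d) ℝ (EuclideanSpace ℝ (Fin d))) (r : ℝ) :
    Set (EuclideanSpace ℝ (Fin d)) :=
  {θ | θ ∈ dualLattice B ∧ ‖θ‖ ≤ r}

/-- A lattice r-subspace: a subspace spanned by dual lattice vectors from Θ_r⁰. -/
def IsLatticeSubspace (B : Basis (Fin d) ℝ (EuclideanSpace ℝ (Fin d))) (r : ℝ)
    (V : Submodule ℝ (EuclideanSpace ℝ (Fin d))) : Prop :=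
  ∃ S : Set (EuclideanSpace ℝ (Fin d)), S ⊆ Theta0 B r ∧ V = Submodule.span ℝ S

/-- Orthogonal projection ξ_V onto a subspace, viewed in the ambient space. -/
def projV (V : Submodule ℝ (EuclideanSpace ℝ (Fin d))) (ξ : EuclideanSpace ℝ (Fin d)) :
    EuclideanSpace ℝ (Fin d) :=
  (orthogonalProjection V ξ : EuclideanSpace ℝ (Fin d))

/-- ω_n: the volume of the unit ball in ℝ^n. -/
def unitBallVol (n : ℕ) : ℝ :=
  (MeasureTheory.volume (Metric.ball (0 : EuclideanSpace ℝ (Fin n)) 1)).toReal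

/-- The resonant layer Λ(θ) (= ℝ^d when θ = 0). -/
def layer (ρ a : ℝ) (θ : EuclideanSpace ℝ (Fin d)) : Set (EuclideanSpace ℝ (Fin d)) :=
  {ξ | θ = 0 ∨ |⟪ξ, θ⟫| < ρ ^ a * ‖θ‖}

/-- Υ_θ(ξ): the points θ-resonant congruent to ξ. -/
def upsTheta (ρ a : ℝ) (θ ξ : EuclideanSpace ℝ (Fin d)) : Set (EuclideanSpace ℝ (Fin d)) :=
  {η | ξ ∈ layer ρ a θ ∧ η ∈ layer ρ a θ ∧ ∃ l : ℤ, ξ - η = (l : ℝ) • θ}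

/-- One step of resonant congruence (with some θ ∈ Θ_r⁰). -/
def resStep (B : Basis (Fin d) ℝ (EuclideanSpace ℝ (Fin d))) (ρ a r : ℝ)
    (ξ η : EuclideanSpace ℝ (Fin d)) : Prop :=
  ∃ θ ∈ Theta0 B r, η ∈ upsTheta ρ a θ ξ

/-- Υ(ξ): all points resonant congruent to ξ. -/
def Ups (B : Basis (Fin d) ℝ (EuclideanSpace ℝ (Fin d))) (ρ a r : ℝ)
    (ξ : EuclideanSpace ℝ (Fin d)) : Set (EuclideanSpace ℝ (Fin d)) :=
  {η | Relation.ReflTransGen (resStep B ρ a r) ξ η}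

/-- N(ξ) = Υ(ξ) − ξ. -/
def resN (B : Basis (Fin d) ℝ (EuclideanSpace ℝ (Fin d))) (ρ a r : ℝ)
    (ξ : EuclideanSpace ℝ (Fin d)) : Set (EuclideanSpace ℝ (Fin d)) :=
  {m | ξ + m ∈ Ups B ρ a r ξ}

/-- Ξ₁(V) = {ξ : |ξ_V| < ρ^{α_n}}, n = dim V. -/
def Xi1 (ρ : ℝ) (α : ℕ → ℝ) (V : Submodule ℝ (EuclideanSpace ℝ (Fin d))) :
    Set (EuclideanSpace ℝ (Fin d)) :=
  {ξ | ‖projV V ξ‖ < ρ ^ α (Module.finrank ℝ V)}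

/-- Ξ₂(V) = ∪_{ξ ∈ Ξ₁(V)} Υ(ξ). -/
def Xi2 (B : Basis (Fin d) ℝ (EuclideanSpace ℝ (Fin d))) (ρ r : ℝ) (α : ℕ → ℝ)
    (V : Submodule ℝ (EuclideanSpace ℝ (Fin d))) : Set (EuclideanSpace ℝ (Fin d)) :=
  {η | ∃ ξ ∈ Xi1 ρ α V, η ∈ Ups B ρ (α 1) r ξ}

/-- Ξ(V): Ξ₂(V) minus the Ξ₂(W) for all lattice r-subspaces W of larger dimension. -/
def Xi (B : Basis (Fin d) ℝ (EuclideanSpace ℝ (Fin d))) (ρ r : ℝ) (α : ℕ → ℝ)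
    (V : Submodule ℝ (EuclideanSpace ℝ (Fin d))) : Set (EuclideanSpace ℝ (Fin d)) :=
  Xi2 B ρ r α V \
    ⋃ W ∈ {W : Submodule ℝ (EuclideanSpace ℝ (Fin d)) |
        IsLatticeSubspace B r W ∧ Module.finrank ℝ V < Module.finrank ℝ W},
      Xi2 B ρ r α W

/-- The standing conditions on the parameters ρ ≥ 1, r, κ > 0 and the exponents α_j:
0 = α₀, α_{n+1} > α_n + 2κd², α_d < 1, r ≤ ρ^κ, and r ≥ r₀ (i.e. Θ_r⁰ spans ℝ^d). -/
def GoodParams (B : Basis (Fin d) ℝ (EuclideanSpace ℝ (Fin d))) (ρ r κ : ℝ)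
    (α : ℕ → ℝ) : Prop :=
  1 ≤ ρ ∧ 0 < κ ∧ α 0 = 0 ∧ (∀ n < d, α n + 2 * κ * (d : ℝ) ^ 2 < α (n + 1)) ∧
    α d < 1 ∧ r ≤ ρ ^ κ ∧ Submodule.span ℝ (Theta0 B r) = ⊤


/-- The vector of inner products with the lattice basis, in units of `2π`; it has integer
entries on the dual lattice. -/
def dualCoords (B : Basis (Fin d) ℝ (EuclideanSpace ℝ (Fin d))) :
    EuclideanSpace ℝ (Fin d) →ₗ[ℝ] (Fin d → ℝ) :=
  LinearMap.pi fun j => (2 * Real.pi)⁻¹ • (innerₗ (EuclideanSpace ℝ (Fin d))) (B j)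

lemma dualCoords_apply (B : Basis (Fin d) ℝ (EuclideanSpace ℝ (Fin d)))
    (x : EuclideanSpace ℝ (Fin d)) (j : Fin d) :
    dualCoords B x j = (2 * Real.pi)⁻¹ * ⟪B j, x⟫ := by
  simp [dualCoords]

lemma ker_dualCoords (B : Basis (Fin d) ℝ (EuclideanSpace ℝ (Fin d))) :
    LinearMap.ker (dualCoords B) = ⊥ := by
  rw [LinearMap.ker_eq_bot']
  intro x hx
  refine InnerProductSpace.ext_inner_left_basis B fun j => ?_
  have h := congrFun hx j
  rw [dualCoords_apply] at h
  simpa [Real.pi_ne_zero] using h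

lemma exists_int_dualCoords (B : Basis (Fin d) ℝ (EuclideanSpace ℝ (Fin d)))
    {θ : EuclideanSpace ℝ (Fin d)} (hθ : θ ∈ dualLattice B) (j : Fin d) :
    ∃ k : ℤ, dualCoords B θ j = k := by
  obtain ⟨k, hk⟩ := hθ (B j) (Submodule.subset_span ⟨j, rfl⟩)
  refine ⟨k, ?_⟩
  rw [dualCoords_apply, real_inner_comm, hk]
  field_simp

/-- The determinant of the dual coordinates, as an alternating form. -/
def dualDet (B : Basis (Fin d) ℝ (EuclideanSpace ℝ (Fin d))) :
    EuclideanSpace ℝ (Fin d) [⋀^Fin d]→ₗ[ℝ] ℝ :=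
  Matrix.detRowAlternating.compLinearMap (dualCoords B)

lemma one_le_abs_dualDet (B : Basis (Fin d) ℝ (EuclideanSpace ℝ (Fin d)))
    {t : Fin d → EuclideanSpace ℝ (Fin d)} (ht : ∀ i, t i ∈ dualLattice B)
    (hli : LinearIndependent ℝ t) : 1 ≤ |dualDet B t| := by
  choose M hM using fun i j => exists_int_dualCoords B (ht i) j
  have hdet : dualDet B t = ((Matrix.det (Matrix.of M) : ℤ) : ℝ) := by
    have h : dualDet B t = Matrix.det (Matrix.of fun i => dualCoords B (t i)) := rfl
    rw [h, Int.cast_det]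
    congr 1
    ext i j
    simp [hM]
  have hne : dualDet B t ≠ 0 := by
    have hrow : LinearIndependent ℝ (Matrix.of fun i => dualCoords B (t i)).row :=
      hli.map' (dualCoords B) (ker_dualCoords B)
    have hu := Matrix.linearIndependent_rows_iff_isUnit.1 hrow
    rw [Matrix.isUnit_iff_isUnit_det] at hu
    exact hu.ne_zero
  rw [hdet] at hne ⊢
  rw [← Int.cast_abs]
  exact_mod_cast Int.one_le_abs (by exact_mod_cast hne)

lemma exists_dualDet_bound (B : Basis (Fin d) ℝ (EuclideanSpace ℝ (Fin d))) :
    ∃ C : ℝ, 0 < C ∧ ∀ v, |dualDet B v| ≤ C * ∏ i, ‖v i‖ := by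
  have hcont : Continuous (dualDet B) := by
    have h : (dualDet B : (Fin d → EuclideanSpace ℝ (Fin d)) → ℝ) =
        fun v => Matrix.det (Matrix.of fun i => dualCoords B (v i)) := rfl
    rw [h]
    refine Continuous.matrix_det ?_
    refine continuous_pi fun i => ?_
    exact (LinearMap.continuous_of_finiteDimensional (dualCoords B)).comp (continuous_apply i)
  simpa using (dualDet B).exists_bound_of_continuous hcont

/-- A short dual lattice vector outside a lattice subspace is not too close to it. -/
lemma exists_one_le_mul_norm_sub (B : Basis (Fin d) ℝ (EuclideanSpace ℝ (Fin d))) :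
    ∃ C : ℝ, 0 < C ∧ ∀ r R : ℝ, 1 ≤ R → r ≤ R → span ℝ (Theta0 B r) = ⊤ →
      ∀ U : Submodule ℝ (EuclideanSpace ℝ (Fin d)), IsLatticeSubspace B r U →
      ∀ θ ∈ Theta0 B r, θ ∉ U → ∀ p ∈ U, 1 ≤ C * R ^ (d - 1) * ‖θ - p‖ := by
  obtain ⟨C, hC, hbound⟩ := exists_dualDet_bound B
  refine ⟨C, hC, ?_⟩
  rintro r R hR hrR htop U ⟨S, hS, rfl⟩ θ hθ hθU p hp
  obtain ⟨S', hS'S, hspan, hli⟩ := exists_linearIndependent ℝ S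
  rw [← hspan] at hθU hp
  have hli' : LinearIndepOn ℝ id (insert θ S') := LinearIndepOn.id_insert hli hθU
  obtain ⟨b, hbT, hb, hTb, hbli⟩ := exists_linearIndepOn_id_extension hli'
    (Set.insert_subset hθ (hS'S.trans hS))
  have hbtop : ⊤ ≤ span ℝ (Set.range ((↑) : b → EuclideanSpace ℝ (Fin d))) := by
    rw [Subtype.range_coe, ← htop]
    exact span_le.2 hTb
  let bas : Basis b ℝ (EuclideanSpace ℝ (Fin d)) := Basis.mk hbli hbtop
  let e := bas.indexEquiv B
  let t : Fin d → EuclideanSpace ℝ (Fin d) := fun i => ((e.symm i : b) : EuclideanSpace ℝ (Fin d))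
  have htli : LinearIndependent ℝ t := hbli.comp _ e.symm.injective
  have htT : ∀ i, t i ∈ Theta0 B r := fun i => hbT (e.symm i).2
  let i₀ : Fin d := e ⟨θ, hb (Set.mem_insert _ _)⟩
  have ht₀ : t i₀ = θ := by simp [t, i₀]
  have hp' : p ∈ span ℝ (t '' {i₀}ᶜ) := by
    refine span_mono ?_ hp
    intro s hs
    refine ⟨e ⟨s, hb (Set.mem_insert_of_mem _ hs)⟩, ?_, by simp [t]⟩
    simp only [i₀, Set.mem_compl_iff, Set.mem_singleton_iff, EmbeddingLike.apply_eq_iff_eq,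
      Subtype.mk.injEq]
    rintro rfl
    exact hθU (subset_span hs)
  have hzero : dualDet B (Function.update t i₀ p) = 0 := by
    apply AlternatingMap.map_linearDependent
    intro h
    refine h.notMem_span_image (s := {i₀}ᶜ) (x := i₀) (by simp) ?_
    have himg : Function.update t i₀ p '' {i₀}ᶜ = t '' {i₀}ᶜ :=
      Set.image_congr fun i hi => Function.update_of_ne hi _ _
    rwa [himg, Function.update_self]
  have hdet : dualDet B t = dualDet B (Function.update t i₀ (θ - p)) := by
    rw [AlternatingMap.map_update_sub, hzero, sub_zero, ← ht₀, Function.update_eq_self]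
  calc (1 : ℝ) ≤ |dualDet B t| := one_le_abs_dualDet B (fun i => (htT i).1) htli
    _ ≤ C * ∏ i, ‖Function.update t i₀ (θ - p) i‖ := by rw [hdet]; exact hbound _
    _ = C * (‖θ - p‖ * ∏ i ∈ Finset.univ.erase i₀, ‖Function.update t i₀ (θ - p) i‖) := by
        rw [← Finset.mul_prod_erase Finset.univ _ (Finset.mem_univ i₀), Function.update_self]
    _ ≤ C * (‖θ - p‖ * ∏ _i ∈ Finset.univ.erase i₀, R) := by
        gcongr with i hi
        rw [Function.update_of_ne (Finset.ne_of_mem_erase hi)]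
        exact (htT i).2.trans hrR
    _ = C * R ^ (d - 1) * ‖θ - p‖ := by
        rw [Finset.prod_const, Finset.card_erase_of_mem (Finset.mem_univ i₀), Finset.card_univ,
          Fintype.card_fin]
        ring

/-- The functional `⟪x, ·⟫` has norm at most `A` on the subspace `U`. -/
def InnerBound (U : Submodule ℝ (EuclideanSpace ℝ (Fin d))) (x : EuclideanSpace ℝ (Fin d))
    (A : ℝ) : Prop :=
  ∀ u ∈ U, |⟪x, u⟫| ≤ A * ‖u‖

lemma InnerBound.mono {U : Submodule ℝ (EuclideanSpace ℝ (Fin d))}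
    {x : EuclideanSpace ℝ (Fin d)} {A A' : ℝ} (h : InnerBound U x A) (hA : A ≤ A') :
    InnerBound U x A' :=
  fun u hu => (h u hu).trans (by gcongr)

lemma InnerBound.of_norm_sub_le {U : Submodule ℝ (EuclideanSpace ℝ (Fin d))}
    {x y : EuclideanSpace ℝ (Fin d)} {A D : ℝ} (h : InnerBound U x A) (hD : ‖x - y‖ ≤ D) :
    InnerBound U y (A + D) := by
  intro u hu
  have h₁ : ⟪y, u⟫ = ⟪x, u⟫ - ⟪x - y, u⟫ := by rw [inner_sub_left]; ring
  calc |⟪y, u⟫| ≤ |⟪x, u⟫| + |⟪x - y, u⟫| := by rw [h₁]; exact abs_sub _ _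
    _ ≤ A * ‖u‖ + D * ‖u‖ := by
        gcongr
        · exact h u hu
        · exact (abs_real_inner_le_norm _ _).trans (by gcongr)
    _ = (A + D) * ‖u‖ := by ring

lemma norm_projV_sq (U : Submodule ℝ (EuclideanSpace ℝ (Fin d)))
    (x : EuclideanSpace ℝ (Fin d)) : ⟪x, projV U x⟫ = ‖projV U x‖ ^ 2 := by
  have h := U.starProjection_inner_eq_zero x (projV U x) (Subtype.property _)
  rw [inner_sub_left, sub_eq_zero] at h
  rw [h, ← real_inner_self_eq_norm_sq]
  rfl

lemma InnerBound.norm_projV_le {U : Submodule ℝ (EuclideanSpace ℝ (Fin d))}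
    {x : EuclideanSpace ℝ (Fin d)} {A : ℝ} (h : InnerBound U x A) (hA : 0 ≤ A) :
    ‖projV U x‖ ≤ A := by
  have h₁ := h (projV U x) (Subtype.property _)
  rw [norm_projV_sq, abs_of_nonneg (by positivity)] at h₁
  by_contra! hlt
  nlinarith

lemma innerBound_norm_projV (U : Submodule ℝ (EuclideanSpace ℝ (Fin d)))
    (x : EuclideanSpace ℝ (Fin d)) : InnerBound U x ‖projV U x‖ := by
  intro u hu
  have h := U.starProjection_inner_eq_zero x u hu
  rw [inner_sub_left, sub_eq_zero] at h
  rw [h]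
  exact abs_real_inner_le_norm _ _

lemma IsLatticeSubspace.sup_span {B : Basis (Fin d) ℝ (EuclideanSpace ℝ (Fin d))} {r : ℝ}
    {U : Submodule ℝ (EuclideanSpace ℝ (Fin d))} (hU : IsLatticeSubspace B r U)
    {θ : EuclideanSpace ℝ (Fin d)} (hθ : θ ∈ Theta0 B r) :
    IsLatticeSubspace B r (U ⊔ span ℝ {θ}) := by
  obtain ⟨S, hS, rfl⟩ := hU
  exact ⟨S ∪ {θ}, Set.union_subset hS (by simpa using hθ), (span_union _ _).symm⟩

/-- Adjoining a short dual lattice vector to a lattice subspace worsens an inner product bound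
by at most a factor of order `R ^ d`. -/
lemma exists_innerBound_sup_span (B : Basis (Fin d) ℝ (EuclideanSpace ℝ (Fin d))) (hd : 1 ≤ d) :
    ∃ C : ℝ, 1 ≤ C ∧ ∀ r R : ℝ, 1 ≤ R → r ≤ R → span ℝ (Theta0 B r) = ⊤ →
      ∀ U : Submodule ℝ (EuclideanSpace ℝ (Fin d)), IsLatticeSubspace B r U →
      ∀ θ ∈ Theta0 B r, θ ∉ U → ∀ (x : EuclideanSpace ℝ (Fin d)) (A : ℝ), 0 ≤ A →
        InnerBound U x A → |⟪x, θ⟫| ≤ A * ‖θ‖ →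
        InnerBound (U ⊔ span ℝ {θ}) x (C * R ^ d * A) := by
  obtain ⟨C, hC, hdist⟩ := exists_one_le_mul_norm_sub B
  refine ⟨1 + 2 * C, by linarith, ?_⟩
  intro r R hR hrR htop U hU θ hθ hθU x A hA hUx hθx u hu
  have hR0 : (0 : ℝ) ≤ R := by linarith
  obtain ⟨w, hw, y, hy, rfl⟩ := mem_sup.1 hu
  obtain ⟨t, rfl⟩ := mem_span_singleton.1 hy
  set p := projV U θ with hp
  have hpU : p ∈ U := Subtype.property _
  set z := θ - p with hz
  have hzU : ∀ v ∈ U, ⟪z, v⟫ = 0 := fun v hv => U.starProjection_inner_eq_zero θ v hv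
  have hpθ : ‖p‖ ≤ ‖θ‖ := U.norm_starProjection_apply_le θ
  have hθR : ‖θ‖ ≤ R := hθ.2.trans hrR
  have hzdist : 1 ≤ C * R ^ (d - 1) * ‖z‖ := hdist r R hR hrR htop U hU θ hθ hθU p hpU
  set v := w + t • p with hv
  have hvU : v ∈ U := U.add_mem hw (U.smul_mem _ hpU)
  have hu_eq : w + t • θ = v + t • z := by rw [hv, hz, smul_sub]; abel
  rw [hu_eq]
  have horth : ⟪v, t • z⟫ = 0 := by
    rw [inner_smul_right, real_inner_comm, hzU v hvU, mul_zero]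
  have hpyth := norm_add_sq_eq_norm_sq_add_norm_sq_real horth
  have hvle : ‖v‖ ≤ ‖v + t • z‖ := by
    nlinarith [norm_nonneg v, norm_nonneg (v + t • z), mul_self_nonneg ‖t • z‖]
  have hzle : |t| * ‖z‖ ≤ ‖v + t • z‖ := by
    rw [← Real.norm_eq_abs, ← norm_smul]
    nlinarith [norm_nonneg (t • z), norm_nonneg (v + t • z), mul_self_nonneg ‖v‖]
  have hxz : |⟪x, z⟫| ≤ 2 * A * R := by
    rw [hz, inner_sub_right]
    calc |⟪x, θ⟫ - ⟪x, p⟫| ≤ |⟪x, θ⟫| + |⟪x, p⟫| := abs_sub _ _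
      _ ≤ A * ‖θ‖ + A * ‖p‖ := by gcongr; exact hUx p hpU
      _ ≤ A * R + A * R := by gcongr; exact hpθ.trans hθR
      _ = 2 * A * R := by ring
  have hpow : R ^ d = R ^ (d - 1) * R := by rw [← pow_succ, Nat.sub_add_cancel hd]
  have hRd : 1 ≤ R ^ d := one_le_pow₀ hR
  have ht : |t| ≤ C * R ^ (d - 1) * ‖v + t • z‖ := by
    calc |t| = |t| * 1 := (mul_one _).symm
      _ ≤ |t| * (C * R ^ (d - 1) * ‖z‖) := by gcongr
      _ = C * R ^ (d - 1) * (|t| * ‖z‖) := by ring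
      _ ≤ C * R ^ (d - 1) * ‖v + t • z‖ := by gcongr
  calc |⟪x, v + t • z⟫| ≤ |⟪x, v⟫| + |t| * |⟪x, z⟫| := by
        rw [inner_add_right, inner_smul_right, ← abs_mul]; exact abs_add_le _ _
    _ ≤ A * ‖v‖ + C * R ^ (d - 1) * ‖v + t • z‖ * (2 * A * R) := by
        gcongr; exact hUx v hvU
    _ ≤ 1 * A * ‖v + t • z‖ + C * R ^ (d - 1) * ‖v + t • z‖ * (2 * A * R) := by
        rw [one_mul]; gcongr
    _ ≤ R ^ d * A * ‖v + t • z‖ + C * R ^ (d - 1) * ‖v + t • z‖ * (2 * A * R) := by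
        gcongr
    _ = (1 + 2 * C) * R ^ d * A * ‖v + t • z‖ := by rw [hpow]; ring

/-- One step of resonant congruence along a vector of the subspace `U`. -/
def resStepIn (B : Basis (Fin d) ℝ (EuclideanSpace ℝ (Fin d))) (ρ a r : ℝ)
    (U : Submodule ℝ (EuclideanSpace ℝ (Fin d))) (ξ η : EuclideanSpace ℝ (Fin d)) : Prop :=
  ∃ θ ∈ Theta0 B r, θ ∈ U ∧ η ∈ upsTheta ρ a θ ξ

instance (B : Basis (Fin d) ℝ (EuclideanSpace ℝ (Fin d))) (ρ a r : ℝ)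
    (U : Submodule ℝ (EuclideanSpace ℝ (Fin d))) : Std.Symm (resStepIn B ρ a r U) where
  symm := by
    rintro ξ η ⟨θ, hθ, hθU, hξ, hη, l, hl⟩
    refine ⟨θ, hθ, hθU, hη, hξ, -l, ?_⟩
    rw [← neg_sub, hl, Int.cast_neg, neg_smul]

lemma sub_mem_of_reflTransGen_resStepIn {B : Basis (Fin d) ℝ (EuclideanSpace ℝ (Fin d))}
    {ρ a r : ℝ} {U : Submodule ℝ (EuclideanSpace ℝ (Fin d))} {ξ η : EuclideanSpace ℝ (Fin d)}
    (h : ReflTransGen (resStepIn B ρ a r U) ξ η) : ξ - η ∈ U := by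
  induction h with
  | refl => simp
  | @tail y z _ hstep ih =>
    obtain ⟨θ, -, hθU, -, -, l, hl⟩ := hstep
    rw [← sub_add_sub_cancel ξ y z, hl]
    exact U.add_mem ih (U.smul_mem _ hθU)

lemma norm_sub_le_of_innerBound {U : Submodule ℝ (EuclideanSpace ℝ (Fin d))}
    {x y : EuclideanSpace ℝ (Fin d)} {A : ℝ} (hxy : x - y ∈ U) (hx : InnerBound U x A)
    (hy : InnerBound U y A) (hA : 0 ≤ A) : ‖x - y‖ ≤ 2 * A := by
  have h : ‖x - y‖ ^ 2 = ⟪x, x - y⟫ - ⟪y, x - y⟫ := by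
    rw [← inner_sub_left, real_inner_self_eq_norm_sq]
  have h₁ := (le_abs_self _).trans (hx _ hxy)
  have h₂ := (neg_le_abs _).trans (hy _ hxy)
  by_contra! hlt
  nlinarith

/-- Either the resonant class of `x` within `U` is already produced by a smaller lattice
subspace, or `x` is almost orthogonal to `U`. -/
lemma resonant_dichotomy {B : Basis (Fin d) ℝ (EuclideanSpace ℝ (Fin d))} {ρ a r Q : ℝ}
    (hρ : 0 ≤ ρ) (hQ : 1 ≤ Q)
    (hext : ∀ U : Submodule ℝ (EuclideanSpace ℝ (Fin d)), IsLatticeSubspace B r U →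
      ∀ θ ∈ Theta0 B r, θ ∉ U → ∀ (x : EuclideanSpace ℝ (Fin d)) (A : ℝ), 0 ≤ A →
        InnerBound U x A → |⟪x, θ⟫| ≤ A * ‖θ‖ → InnerBound (U ⊔ span ℝ {θ}) x (Q / 4 * A))
    {n : ℕ} (hdiam : ∀ U : Submodule ℝ (EuclideanSpace ℝ (Fin d)), IsLatticeSubspace B r U →
      finrank ℝ U ≤ n → ∀ x y, ReflTransGen (resStepIn B ρ a r U) x y →
        ‖x - y‖ ≤ Q ^ finrank ℝ U * ρ ^ a)
    {U : Submodule ℝ (EuclideanSpace ℝ (Fin d))} (hUn : finrank ℝ U ≤ n + 1)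
    (x : EuclideanSpace ℝ (Fin d)) :
    (∃ U' : Submodule ℝ (EuclideanSpace ℝ (Fin d)), IsLatticeSubspace B r U' ∧ U' < U ∧
      ∀ y, ReflTransGen (resStepIn B ρ a r U) x y → ReflTransGen (resStepIn B ρ a r U') x y) ∨
    InnerBound U x (Q ^ finrank ℝ U * ρ ^ a / 2) := by
  have hρa : 0 ≤ ρ ^ a := Real.rpow_nonneg hρ a
  by_contra! hcon
  obtain ⟨hgrow, hbad⟩ := hcon
  have hflag : ∀ j : ℕ, ∃ U' : Submodule ℝ (EuclideanSpace ℝ (Fin d)),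
      IsLatticeSubspace B r U' ∧ U' < U ∧ j ≤ finrank ℝ U' ∧
        InnerBound U' x (Q ^ finrank ℝ U' * ρ ^ a / 2) := by
    intro j
    induction j with
    | zero =>
      have hbot : InnerBound ⊥ x
          (Q ^ finrank ℝ (⊥ : Submodule ℝ (EuclideanSpace ℝ (Fin d))) * ρ ^ a / 2) := by
        intro u hu
        simp [(mem_bot ℝ).1 hu]
      refine ⟨⊥, ⟨∅, Set.empty_subset _, by simp⟩, bot_lt_iff_ne_bot.2 ?_, Nat.zero_le _, hbot⟩
      rintro rfl
      exact hbad hbot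
    | succ j ih =>
      obtain ⟨U', hU', hlt, hj, hb⟩ := ih
      obtain ⟨y, hy, hy'⟩ := hgrow U' hU' hlt
      obtain ⟨z, θ, hxz, hθ, hθU, hθU', hz⟩ : ∃ z θ, ReflTransGen (resStepIn B ρ a r U') x z ∧
          θ ∈ Theta0 B r ∧ θ ∈ U ∧ θ ∉ U' ∧ z ∈ layer ρ a θ := by
        by_contra! hno
        refine hy' ?_
        clear hy'
        induction hy with
        | refl => exact .refl
        | @tail v w _ hstep ih =>
          obtain ⟨θ, hθ, hθU, hw⟩ := hstep
          by_cases hθU' : θ ∈ U'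
          · exact ih.tail ⟨θ, hθ, hθU', hw⟩
          · exact absurd hw.1 (hno v θ ih hθ hθU hθU')
      have hθ0 : θ ≠ 0 := fun h => hθU' (h ▸ U'.zero_mem)
      have hzθ : |⟪z, θ⟫| ≤ ρ ^ a * ‖θ‖ := (hz.resolve_left hθ0).le
      have hlt' := Submodule.finrank_lt_finrank_of_lt hlt
      have hxzD := hdiam U' hU' (by omega) x z hxz
      have hone : 1 ≤ Q ^ finrank ℝ U' := one_le_pow₀ hQ
      have hxθ : |⟪x, θ⟫| ≤ 2 * (Q ^ finrank ℝ U' * ρ ^ a) * ‖θ‖ := by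
        have h₁ : ⟪x, θ⟫ = ⟪z, θ⟫ + ⟪x - z, θ⟫ := by rw [inner_sub_left]; ring
        calc |⟪x, θ⟫| ≤ |⟪z, θ⟫| + |⟪x - z, θ⟫| := by rw [h₁]; exact abs_add_le _ _
          _ ≤ 1 * ρ ^ a * ‖θ‖ + Q ^ finrank ℝ U' * ρ ^ a * ‖θ‖ := by
              rw [one_mul]
              gcongr
              exact (abs_real_inner_le_norm _ _).trans (by gcongr)
          _ ≤ Q ^ finrank ℝ U' * ρ ^ a * ‖θ‖ + Q ^ finrank ℝ U' * ρ ^ a * ‖θ‖ := by gcongr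
          _ = 2 * (Q ^ finrank ℝ U' * ρ ^ a) * ‖θ‖ := by ring
      have hnn : 0 ≤ Q ^ finrank ℝ U' * ρ ^ a := by positivity
      have hfr := Submodule.finrank_sup_span_singleton hθU'
      have hb' : InnerBound (U' ⊔ span ℝ {θ}) x (Q ^ finrank ℝ
          (U' ⊔ span ℝ {θ} : Submodule ℝ (EuclideanSpace ℝ (Fin d))) * ρ ^ a / 2) := by
        refine (hext U' hU' θ hθ hθU' x _ (by positivity) (hb.mono (by linarith)) hxθ).mono ?_
        calc Q / 4 * (2 * (Q ^ finrank ℝ U' * ρ ^ a))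
            = Q ^ (finrank ℝ U' + 1) * ρ ^ a / 2 := by ring
          _ ≤ _ := by gcongr; exact hfr.ge
      have hle : U' ⊔ span ℝ {θ} ≤ U :=
        sup_le hlt.le ((span_singleton_le_iff_mem _ _).2 hθU)
      refine ⟨U' ⊔ span ℝ {θ}, hU'.sup_span hθ, lt_of_le_of_ne hle ?_, by omega, hb'⟩
      intro h
      rw [h] at hb'
      exact hbad hb'
  obtain ⟨U', -, hlt, hj, -⟩ := hflag (finrank ℝ U)
  exact absurd (Submodule.finrank_lt_finrank_of_lt hlt) (by omega)

lemma norm_sub_le_of_reflTransGen_resStepIn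
    {B : Basis (Fin d) ℝ (EuclideanSpace ℝ (Fin d))} {ρ a r Q : ℝ} (hρ : 0 ≤ ρ) (hQ : 1 ≤ Q)
    (hext : ∀ U : Submodule ℝ (EuclideanSpace ℝ (Fin d)), IsLatticeSubspace B r U →
      ∀ θ ∈ Theta0 B r, θ ∉ U → ∀ (x : EuclideanSpace ℝ (Fin d)) (A : ℝ), 0 ≤ A →
        InnerBound U x A → |⟪x, θ⟫| ≤ A * ‖θ‖ → InnerBound (U ⊔ span ℝ {θ}) x (Q / 4 * A))
    (n : ℕ) (U : Submodule ℝ (EuclideanSpace ℝ (Fin d))) (hU : IsLatticeSubspace B r U)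
    (hUn : finrank ℝ U ≤ n) (x y : EuclideanSpace ℝ (Fin d))
    (hxy : ReflTransGen (resStepIn B ρ a r U) x y) :
    ‖x - y‖ ≤ Q ^ finrank ℝ U * ρ ^ a := by
  have hρa : 0 ≤ ρ ^ a := Real.rpow_nonneg hρ a
  induction n generalizing U x y with
  | zero =>
    have hmem := sub_mem_of_reflTransGen_resStepIn hxy
    rw [Submodule.finrank_eq_zero.1 (Nat.le_zero.1 hUn), mem_bot] at hmem
    rw [hmem, norm_zero]
    positivity
  | succ n ih =>
    have hsmall : ∀ U' : Submodule ℝ (EuclideanSpace ℝ (Fin d)), IsLatticeSubspace B r U' →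
        U' < U → ∀ x y, ReflTransGen (resStepIn B ρ a r U') x y →
        ‖x - y‖ ≤ Q ^ finrank ℝ U * ρ ^ a := by
      intro U' hU' hlt x y hxy
      have hfr := Submodule.finrank_lt_finrank_of_lt hlt
      refine (ih U' hU' (by omega) x y hxy).trans ?_
      gcongr
    have hyx : ReflTransGen (resStepIn B ρ a r U) y x :=
      symm hxy
    rcases resonant_dichotomy hρ hQ hext ih hUn x with ⟨U', hU', hlt, hcl⟩ | hx
    · exact hsmall U' hU' hlt x y (hcl y hxy)
    rcases resonant_dichotomy hρ hQ hext ih hUn y with ⟨U', hU', hlt, hcl⟩ | hy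
    · rw [norm_sub_rev]
      exact hsmall U' hU' hlt y x (hcl x hyx)
    refine (norm_sub_le_of_innerBound (sub_mem_of_reflTransGen_resStepIn hxy) hx hy
      (by positivity)).trans_eq ?_
    ring

lemma innerBound_sup {B : Basis (Fin d) ℝ (EuclideanSpace ℝ (Fin d))} {r Q : ℝ} (hQ : 1 ≤ Q)
    (hext : ∀ U : Submodule ℝ (EuclideanSpace ℝ (Fin d)), IsLatticeSubspace B r U →
      ∀ θ ∈ Theta0 B r, θ ∉ U → ∀ (x : EuclideanSpace ℝ (Fin d)) (A : ℝ), 0 ≤ A →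
        InnerBound U x A → |⟪x, θ⟫| ≤ A * ‖θ‖ → InnerBound (U ⊔ span ℝ {θ}) x (Q * A))
    {V W : Submodule ℝ (EuclideanSpace ℝ (Fin d))} (hV : IsLatticeSubspace B r V)
    (hW : IsLatticeSubspace B r W) (hV0 : V ≠ ⊥) {x : EuclideanSpace ℝ (Fin d)} {A : ℝ}
    (hA : 0 ≤ A) (hxV : InnerBound V x A) (hxW : InnerBound W x A) :
    InnerBound (V ⊔ W) x (Q ^ (d - 1) * A) := by
  have hflag : ∀ j : ℕ, ∃ U : Submodule ℝ (EuclideanSpace ℝ (Fin d)),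
      IsLatticeSubspace B r U ∧ V ≤ U ∧ U ≤ V ⊔ W ∧ InnerBound U x (Q ^ j * A) ∧
        (U = V ⊔ W ∨ finrank ℝ V + j ≤ finrank ℝ U) := by
    intro j
    induction j with
    | zero => exact ⟨V, hV, le_rfl, le_sup_left, by simpa using hxV, .inr le_rfl⟩
    | succ j ih =>
      obtain ⟨U, hU, hVU, hUVW, hb, hfr⟩ := ih
      have hjA : A ≤ Q ^ j * A := le_mul_of_one_le_left hA (one_le_pow₀ hQ)
      by_cases hWU : W ≤ U
      · refine ⟨U, hU, hVU, hUVW, hb.mono ?_, .inl (le_antisymm hUVW (sup_le hVU hWU))⟩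
        gcongr
        exact j.le_succ
      obtain ⟨S, hS, hWS⟩ := hW
      obtain ⟨θ, hθS, hθU⟩ : ∃ θ ∈ S, θ ∉ U := by
        by_contra! h
        exact hWU (hWS ▸ span_le.2 h)
      have hθW : θ ∈ W := hWS ▸ subset_span hθS
      have hfr' := Submodule.finrank_sup_span_singleton hθU
      refine ⟨U ⊔ span ℝ {θ}, hU.sup_span (hS hθS), hVU.trans le_sup_left,
        sup_le hUVW ((span_singleton_le_iff_mem _ _).2 (mem_sup_right hθW)), ?_, ?_⟩
      · rw [pow_succ', mul_assoc]
        refine hext U hU θ (hS hθS) hθU x _ (by positivity) hb ((hxW θ hθW).trans ?_)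
        gcongr
      · refine .inr ?_
        rcases hfr with rfl | hfr
        · exact absurd (mem_sup_right hθW) hθU
        · omega
  obtain ⟨U, -, -, hUVW, hb, rfl | hfr⟩ := hflag (d - 1)
  · exact hb
  have hV1 : 1 ≤ finrank ℝ V := Submodule.one_le_finrank_iff.2 hV0
  have hd := finrank_euclideanSpace_fin (𝕜 := ℝ) (n := d)
  have htop : U = ⊤ := Submodule.eq_top_of_finrank_eq
    (le_antisymm (Submodule.finrank_le U) (by omega))
  subst htop
  rwa [top_le_iff.1 hUVW]

/-- Lemma 5.12: for sufficiently large ρ, for any two strongly distinct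
lattice r-subspaces V and W, Ξ₂(V) ∩ Ξ₂(W) ⊆ Ξ₁(V + W). -/
theorem Xi2_inter_Xi2_subset_Xi1_sup
    (d : ℕ) (hd : 2 ≤ d) (B : Basis (Fin d) ℝ (EuclideanSpace ℝ (Fin d)))
    (κ : ℝ) (α : ℕ → ℝ) :
    ∃ ρ₀ : ℝ, ∀ ρ r : ℝ, ρ₀ ≤ ρ → GoodParams B ρ r κ α →
      ∀ V W : Submodule ℝ (EuclideanSpace ℝ (Fin d)),
        IsLatticeSubspace B r V → IsLatticeSubspace B r W →
        ¬ V ≤ W → ¬ W ≤ V →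
        Xi2 B ρ r α V ∩ Xi2 B ρ r α W ⊆ Xi1 ρ α (V ⊔ W) := by
  rcases le_or_gt κ 0 with hκ | hκ
  · exact ⟨0, fun ρ r _ hg => absurd hg.2.1 hκ.not_gt⟩
  have hd1 : 1 ≤ d := by omega
  have hdpos : (0 : ℝ) < d := by exact_mod_cast hd1
  obtain ⟨C, hC, hadj⟩ := exists_innerBound_sup_span B hd1
  obtain ⟨ρ₀, hρ₀⟩ := Filter.eventually_atTop.1
    ((tendsto_rpow_atTop (mul_pos hκ hdpos)).eventually_ge_atTop
      (2 * (4 * C) ^ (d - 1) * (4 * C) ^ d))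
  refine ⟨max ρ₀ 2, ?_⟩
  rintro ρ r hρρ₀ ⟨hρ, -, -, hα, -, hr, htop⟩ V W hV hW hVW hWV η ⟨⟨ξ, hξ, hξη⟩, ⟨ζ, hζ, hζη⟩⟩
  have hρpos : 0 < ρ := by linarith
  have hR : 1 ≤ ρ ^ κ := Real.one_le_rpow hρ hκ.le
  have hRd : 1 ≤ (ρ ^ κ) ^ d := one_le_pow₀ hR
  set Q := 4 * C * (ρ ^ κ) ^ d with hQdef
  have hQ : 1 ≤ Q := by nlinarith
  have hext := hadj r (ρ ^ κ) hR hr htop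
  have hext4 : ∀ U : Submodule ℝ (EuclideanSpace ℝ (Fin d)), IsLatticeSubspace B r U →
      ∀ θ ∈ Theta0 B r, θ ∉ U → ∀ (x : EuclideanSpace ℝ (Fin d)) (A : ℝ), 0 ≤ A →
        InnerBound U x A → |⟪x, θ⟫| ≤ A * ‖θ‖ →
          InnerBound (U ⊔ span ℝ {θ}) x (Q / 4 * A) := by
    intro U hU θ hθ hθU x A hA h₁ h₂
    refine (hext U hU θ hθ hθU x A hA h₁ h₂).mono (le_of_eq ?_)
    rw [hQdef]
    ring
  have hext1 : ∀ U : Submodule ℝ (EuclideanSpace ℝ (Fin d)), IsLatticeSubspace B r U →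
      ∀ θ ∈ Theta0 B r, θ ∉ U → ∀ (x : EuclideanSpace ℝ (Fin d)) (A : ℝ), 0 ≤ A →
        InnerBound U x A → |⟪x, θ⟫| ≤ A * ‖θ‖ → InnerBound (U ⊔ span ℝ {θ}) x (Q * A) := by
    intro U hU θ hθ hθU x A hA h₁ h₂
    refine (hext4 U hU θ hθ hθU x A hA h₁ h₂).mono ?_
    gcongr
    linarith
  have hdiam : ∀ x, η ∈ Ups B ρ (α 1) r x → ‖x - η‖ ≤ Q ^ d * ρ ^ α 1 := by
    intro x hx
    have h := norm_sub_le_of_reflTransGen_resStepIn (a := α 1) hρpos.le hQ hext4 d ⊤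
      ⟨Theta0 B r, subset_rfl, htop.symm⟩ (by simp) x η
      (ReflTransGen.mono (fun _ _ ⟨θ, hθ, h⟩ => ⟨θ, hθ, mem_top, h⟩) _ _ hx)
    simpa using h
  have hmono : ∀ m n : ℕ, m ≤ n → n ≤ d → α m ≤ α n := by
    intro m n hmn
    induction n, hmn using Nat.le_induction with
    | base => exact fun _ => le_rfl
    | succ n _ ih =>
      intro hn
      have h₁ := hα n (by omega)
      have h₂ : 0 ≤ 2 * κ * (d : ℝ) ^ 2 := by positivity
      linarith [ih (by omega)]
  have hfV : finrank ℝ V < finrank ℝ (V ⊔ W : Submodule ℝ (EuclideanSpace ℝ (Fin d))) :=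
    Submodule.finrank_lt_finrank_of_lt (left_lt_sup.2 hWV)
  have hfW : finrank ℝ W < finrank ℝ (V ⊔ W : Submodule ℝ (EuclideanSpace ℝ (Fin d))) :=
    Submodule.finrank_lt_finrank_of_lt (right_lt_sup.2 hVW)
  have hV0 : V ≠ ⊥ := by
    rintro rfl
    exact hVW bot_le
  have hV1 : 1 ≤ finrank ℝ V := Submodule.one_le_finrank_iff.2 hV0
  have hk : finrank ℝ (V ⊔ W : Submodule ℝ (EuclideanSpace ℝ (Fin d))) ≤ d := by
    simpa using Submodule.finrank_le (V ⊔ W)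
  change ‖projV (V ⊔ W) η‖ < ρ ^ α (finrank ℝ (V ⊔ W : Submodule ℝ (EuclideanSpace ℝ (Fin d))))
  obtain ⟨k, hkeq⟩ := Nat.exists_eq_add_of_lt (hV1.trans_lt hfV)
  rw [show 1 + k + 1 = (k + 1) + 1 by ring] at hkeq
  have hbound : ∀ (U : Submodule ℝ (EuclideanSpace ℝ (Fin d))) (x : EuclideanSpace ℝ (Fin d)),
      x ∈ Xi1 ρ α U → finrank ℝ U ≤ k + 1 → η ∈ Ups B ρ (α 1) r x →
      InnerBound U η (2 * Q ^ d * ρ ^ α (k + 1)) := by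
    intro U x hx hU hxη
    refine ((innerBound_norm_projV U x).of_norm_sub_le (hdiam x hxη)).mono ?_
    have hx' : ‖projV U x‖ ≤ ρ ^ α (k + 1) :=
      (le_of_lt hx).trans (Real.rpow_le_rpow_of_exponent_le hρ (hmono _ _ hU (by omega)))
    have h₁ : ρ ^ α 1 ≤ ρ ^ α (k + 1) :=
      Real.rpow_le_rpow_of_exponent_le hρ (hmono _ _ (by omega) (by omega))
    calc ‖projV U x‖ + Q ^ d * ρ ^ α 1
        ≤ 1 * ρ ^ α (k + 1) + Q ^ d * ρ ^ α (k + 1) := by rw [one_mul]; gcongr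
      _ ≤ Q ^ d * ρ ^ α (k + 1) + Q ^ d * ρ ^ α (k + 1) := by
          gcongr
          exact one_le_pow₀ hQ
      _ = 2 * Q ^ d * ρ ^ α (k + 1) := by ring
  have hsup := innerBound_sup hQ hext1 hV hW hV0 (by positivity)
    (hbound V ξ hξ (by omega) hξη) (hbound W ζ hζ (by omega) hζη)
  refine (hsup.norm_projV_le (by positivity)).trans_lt ?_
  rw [hkeq]
  have hpow : ∀ j : ℕ, Q ^ j = (4 * C) ^ j * ρ ^ (κ * d * j) := by
    intro j
    rw [hQdef, mul_pow, Real.rpow_mul_natCast hρpos.le, Real.rpow_mul_natCast hρpos.le]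
  have hcast : ((d - 1 : ℕ) : ℝ) = d - 1 := by rw [Nat.cast_sub hd1, Nat.cast_one]
  calc Q ^ (d - 1) * (2 * Q ^ d * ρ ^ α (k + 1))
      = 2 * (4 * C) ^ (d - 1) * (4 * C) ^ d *
          (ρ ^ (κ * d * (d - 1 : ℕ)) * ρ ^ (κ * d * d) * ρ ^ α (k + 1)) := by
        rw [hpow, hpow]
        ring
    _ ≤ ρ ^ (κ * d) * (ρ ^ (κ * d * (d - 1 : ℕ)) * ρ ^ (κ * d * d) * ρ ^ α (k + 1)) := by
        gcongr
        exact hρ₀ ρ ((le_max_left _ _).trans hρρ₀)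
    _ = ρ ^ (α (k + 1) + 2 * κ * (d : ℝ) ^ 2) := by
        rw [← Real.rpow_add hρpos, ← Real.rpow_add hρpos, ← Real.rpow_add hρpos, hcast]
        congr 1
        ring
    _ < ρ ^ α (k + 1 + 1) := by
        refine Real.rpow_lt_rpow_of_exponent_lt ?_ (hα (k + 1) (by omega))
        linarith [le_max_right ρ₀ 2]
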